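/- arXiv:2006.16198 — 2 statements merged into one kernel-verified Lean document; each statement's English description precedes it below -/
import Mathlib

section
/- Let R be a commutative ring with identity, let n ≥ 1 and let a_0, a_1, …, a_n ∈ R. Then δ(a_0, a_1, …, a_n) = δ(-1, a_1, a_2·(-a_0), …, a_i·(-a_0)^{i-1}, …, a_n·(-a_0)^{n-1}); that is, the Hessenberg–Toeplitz determinant with subdiagonal entry a_0 equals the one with subdiagonal entry -1 and first-row entries a_i·(-a_0)^{i-1}. -/
/-!
The two determinants agree term by term in the Leibniz expansion. Put `c = -a₀`. For a permutation
`σ` whose product does not contain a structural zero, `σ i ≤ i + 1` for all `i`, and the `(σ i, i)`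
entries of the two matrices are `eᵢ * c ^ (σ i - i)` and `eᵢ * c ^ (i - σ i)` with truncated
subtraction, where `eᵢ` is the same for both (`a (i - σ i + 1)` on or above the diagonal, `-1` below).
The total exponents agree because `∑ (i - σ i) = 0` over the integers for every permutation
(`sum_sub_perm`).
-/

/-- `hessDet n a₀ a` is the Hessenberg–Toeplitz determinant `δ(a₀, a 1, …, a n)`:
the determinant of the `n × n` matrix whose `(i,j)` entry (0-indexed) is
`a (j - i + 1)` if `j ≥ i`, is `a₀` if `i = j + 1`, and is `0` otherwise. -/
def hessDet {R : Type*} [CommRing R] (n : ℕ) (a₀ : R) (a : ℕ → R) : R :=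
  (Matrix.of fun i j : Fin n =>
    if (i : ℕ) ≤ (j : ℕ) then a ((j : ℕ) - (i : ℕ) + 1)
    else if (i : ℕ) = (j : ℕ) + 1 then a₀ else 0).det

/-- The total downward and total upward displacements of a permutation coincide. -/
theorem sum_sub_perm {n : ℕ} (σ : Equiv.Perm (Fin n)) :
    ∑ i : Fin n, ((σ i : ℕ) - (i : ℕ)) = ∑ i : Fin n, ((i : ℕ) - (σ i : ℕ)) := by
  have hperm : ∑ i : Fin n, (σ i : ℕ) = ∑ i : Fin n, (i : ℕ) :=
    Equiv.sum_comp σ (fun i : Fin n => (i : ℕ))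
  have hadd : ∑ i : Fin n, (((σ i : ℕ) - (i : ℕ)) + (i : ℕ)) =
      ∑ i : Fin n, (((i : ℕ) - (σ i : ℕ)) + (σ i : ℕ)) :=
    Finset.sum_congr rfl fun i _ => by omega
  rw [Finset.sum_add_distrib, Finset.sum_add_distrib, hperm] at hadd
  exact Nat.add_right_cancel hadd

/-- `δ(a₀, a₁, …, aₙ) = δ(-1, a₁, a₂·(-a₀), …, aᵢ·(-a₀)^{i-1}, …, aₙ·(-a₀)^{n-1})`. -/
theorem stmt1 {R : Type*} [CommRing R] (n : ℕ) (hn : 1 ≤ n) (a₀ : R) (a : ℕ → R) :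
    hessDet n a₀ a = hessDet n (-1) (fun i => a i * (-a₀) ^ (i - 1)) := by
  unfold hessDet
  rw [Matrix.det_apply, Matrix.det_apply]
  refine Finset.sum_congr rfl fun σ _ => ?_
  congr 1
  simp only [Matrix.of_apply, Nat.add_sub_cancel]
  by_cases h : ∃ i : Fin n, (i : ℕ) + 1 < (σ i : ℕ)
  -- An entry strictly below the subdiagonal kills both products.
  · obtain ⟨i, hi⟩ := h
    have h₁ : ¬ (σ i : ℕ) ≤ (i : ℕ) := by omega
    have h₂ : ¬ (σ i : ℕ) = (i : ℕ) + 1 := by omega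
    rw [Finset.prod_eq_zero (Finset.mem_univ i) (by rw [if_neg h₁, if_neg h₂]),
      Finset.prod_eq_zero (Finset.mem_univ i) (by rw [if_neg h₁, if_neg h₂])]
  · push Not at h
    let e : Fin n → R := fun i =>
      if (σ i : ℕ) ≤ (i : ℕ) then a ((i : ℕ) - (σ i : ℕ) + 1) else -1
    trans ∏ i : Fin n, e i * (-a₀) ^ ((σ i : ℕ) - (i : ℕ))
    · refine Finset.prod_congr rfl fun i _ => ?_
      by_cases hi : (σ i : ℕ) ≤ (i : ℕ)
      · simp only [e, if_pos hi, Nat.sub_eq_zero_of_le hi, pow_zero, mul_one]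
      · have hi' : (σ i : ℕ) = (i : ℕ) + 1 := by have := h i; omega
        have hexp : (σ i : ℕ) - (i : ℕ) = 1 := by omega
        simp only [e, if_neg hi, if_pos hi', hexp, pow_one, neg_mul_neg, one_mul]
    trans ∏ i : Fin n, e i * (-a₀) ^ ((i : ℕ) - (σ i : ℕ))
    · rw [Finset.prod_mul_distrib, Finset.prod_mul_distrib, Finset.prod_pow_eq_pow_sum,
        Finset.prod_pow_eq_pow_sum, sum_sub_perm]
    · refine Finset.prod_congr rfl fun i _ => ?_
      by_cases hi : (σ i : ℕ) ≤ (i : ℕ)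
      · simp only [e, if_pos hi]
      · have hi' : (σ i : ℕ) = (i : ℕ) + 1 := by have := h i; omega
        have hexp : (i : ℕ) - (σ i : ℕ) = 0 := by omega
        simp only [e, if_neg hi, if_pos hi', hexp, pow_zero, mul_one]
end

section
/- Let R be a commutative ring with identity, let n ≥ 1, let r, c_0, …, c_{n-1} ∈ R, let k ≥ 0, and let C = circ_{n,r}(c_0, …, c_{n-1}) be the n×n r-circulant matrix. For m ≥ 1 let 𝒳_m(X) = δ(-X, c_1, …, c_m) ∈ R[X] (where c_i := 0 for i ≥ n) and let 𝒳_0 = 1, and for i ≤ m let d_{m,i} be the coefficient of X^{m-i} in 𝒳_m(X). Then C^k is r-circulant and for each p with 0 ≤ p ≤ n-1, its (0,p) entry equals Σ_{m ≥ 0, m ≡ p (mod n)} (Σ_{i=0}^{min(m,k)} d_{m,i}·c_0^{k-i}·C(k,i))·r^{⌊m/n⌋}, where d_{0,0} = 1, C(k,i) is the binomial coefficient, and the outer sum has finitely many nonzero terms (all terms with m > k(n-1) vanish). -/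
/-- `circMat n r c` is the `n × n` `r`-circulant matrix `circ_{n,r}(c 0, …, c (n-1))`:
its `(i,j)` entry (0-indexed) is `c (j-i)` if `j ≥ i` and `r·c (n+j-i)` if `j < i`. -/
def circMat {R : Type*} [CommRing R] (n : ℕ) (r : R) (c : ℕ → R) :
    Matrix (Fin n) (Fin n) R :=
  Matrix.of fun i j =>
    if (i : ℕ) ≤ (j : ℕ) then c ((j : ℕ) - (i : ℕ))
    else r * c (n + (j : ℕ) - (i : ℕ))

open Polynomial

/-- The `m`-th power of the basic `r`-circulant `P`, given by its entries: `P` sends the index `i`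
to `i + 1` modulo `n` and contributes a factor `r` at each wrap-around. -/
def shiftMat {R : Type*} [CommRing R] (n : ℕ) (r : R) (m : ℕ) : Matrix (Fin n) (Fin n) R :=
  Matrix.of fun i j => if ((i : ℕ) + m) % n = (j : ℕ) then r ^ (((i : ℕ) + m) / n) else 0

lemma shiftMat_zero {R : Type*} [CommRing R] (n : ℕ) (r : R) : shiftMat n r 0 = 1 := by
  ext i j
  simp [shiftMat, Matrix.one_apply, Nat.mod_eq_of_lt i.2, Nat.div_eq_of_lt i.2, Fin.ext_iff]

lemma shiftMat_mul {R : Type*} [CommRing R] (n : ℕ) (r : R) (m l : ℕ) :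
    shiftMat n r m * shiftMat n r l = shiftMat n r (m + l) := by
  ext i j
  have hn : 0 < n := i.pos
  rw [Matrix.mul_apply, Finset.sum_eq_single ⟨((i : ℕ) + m) % n, Nat.mod_lt _ hn⟩]
  · have h1 : (((i : ℕ) + m) % n + l) % n = ((i : ℕ) + (m + l)) % n := by
      rw [Nat.mod_add_mod, add_assoc]
    have h2 : ((i : ℕ) + m) / n + (((i : ℕ) + m) % n + l) / n = ((i : ℕ) + (m + l)) / n := by
      conv_rhs => rw [← add_assoc, ← Nat.div_add_mod ((i : ℕ) + m) n, add_assoc,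
        Nat.mul_add_div hn]
    simp only [shiftMat, Matrix.of_apply, h1, if_true]
    split_ifs
    · rw [← pow_add, h2]
    · simp
  · intro b _ hb
    have : ((i : ℕ) + m) % n ≠ b := fun h => hb (Fin.ext h.symm)
    simp [shiftMat, this]
  · simp

lemma shiftMat_pow {R : Type*} [CommRing R] (n : ℕ) (r : R) (m : ℕ) :
    shiftMat n r 1 ^ m = shiftMat n r m := by
  induction m with
  | zero => rw [pow_zero, shiftMat_zero]
  | succ m ih => rw [pow_succ, ih, shiftMat_mul]

lemma shiftMat_eq_circMat {R : Type*} [CommRing R] (n : ℕ) (r : R) (m : ℕ) :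
    shiftMat n r m = circMat n r (fun t => if m % n = t then r ^ (m / n) else 0) := by
  ext i j
  have hn : 0 < n := i.pos
  have hi := i.2
  have hj := j.2
  have hs := Nat.mod_lt m hn
  -- Replace `m` by `n * q + s` with `s < n`: there is a wrap-around exactly when `n ≤ i + s`.
  have key : ((i : ℕ) + m) = n * (m / n) + ((i : ℕ) + m % n) := by
    have := Nat.div_add_mod m n
    omega
  simp only [shiftMat, circMat, Matrix.of_apply]
  rw [key, Nat.mul_add_mod, Nat.mul_add_div hn]
  by_cases hw : (i : ℕ) + m % n < n
  · rw [Nat.mod_eq_of_lt hw, Nat.div_eq_of_lt hw, add_zero]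
    by_cases hij : (i : ℕ) ≤ j
    · rw [if_pos hij]
      exact if_congr (by omega) rfl rfl
    · rw [if_neg hij, if_neg (by omega), if_neg (by omega), mul_zero]
  · have h1 : ((i : ℕ) + m % n) % n = (i : ℕ) + m % n - n := by
      rw [Nat.mod_eq_sub_mod (by omega), Nat.mod_eq_of_lt (by omega)]
    have h2 : ((i : ℕ) + m % n) / n = 1 := by
      rw [Nat.div_eq_iff hn]
      omega
    rw [h1, h2]
    by_cases hij : (i : ℕ) ≤ j
    · rw [if_pos hij, if_neg (by omega), if_neg (by omega)]
    · rw [if_neg hij, mul_ite, mul_zero, pow_succ']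
      exact if_congr (by omega) rfl rfl

lemma aeval_shiftMat {R : Type*} [CommRing R] (n : ℕ) (r : R) (q : R[X]) (N : ℕ)
    (hN : q.natDegree < N) :
    aeval (shiftMat n r 1) q = ∑ m ∈ Finset.range N, q.coeff m • shiftMat n r m := by
  rw [aeval_eq_sum_range' hN]
  simp only [shiftMat_pow]

lemma sum_smul_circMat {R : Type*} [CommRing R] (n : ℕ) (r : R) (s : Finset ℕ) (b : ℕ → R)
    (d : ℕ → ℕ → R) :
    ∑ m ∈ s, b m • circMat n r (d m) = circMat n r (fun t => ∑ m ∈ s, b m * d m t) := by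
  ext i j
  rw [Matrix.sum_apply]
  simp only [circMat, Matrix.smul_apply, Matrix.of_apply, smul_eq_mul]
  split_ifs
  · rfl
  · rw [Finset.mul_sum]
    exact Finset.sum_congr rfl fun _ _ => by ring

lemma circMat_eq_aeval {R : Type*} [CommRing R] (n : ℕ) (r : R) (c : ℕ → R) :
    circMat n r c = aeval (shiftMat n r 1) (∑ t ∈ Finset.range n, C (c t) * X ^ t) := by
  simp only [map_sum, map_mul, map_pow, aeval_C, aeval_X, shiftMat_pow, ← Algebra.smul_def]
  simp only [shiftMat_eq_circMat]
  rw [sum_smul_circMat]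
  -- Only the values of the symbol at indices below `n` enter `circMat`.
  have key : ∀ t < n, c t =
      ∑ m ∈ Finset.range n, c m * (if m % n = t then r ^ (m / n) else 0) := by
    intro t ht
    rw [Finset.sum_eq_single t]
    · simp [Nat.mod_eq_of_lt ht, Nat.div_eq_of_lt ht]
    · intro b hb hbt
      rw [Nat.mod_eq_of_lt (Finset.mem_range.1 hb), if_neg hbt, mul_zero]
    · simp [ht]
  ext i j
  have hi := i.2
  have hj := j.2
  simp only [circMat, Matrix.of_apply]
  split_ifs with h
  · exact key _ (by omega)
  · rw [← key _ (by omega)]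

/-- Expansion of a determinant that is Hessenberg–Toeplitz except for an arbitrary first row `b`.
This generality is what makes the expansion along the first column an induction. -/
lemma det_hess_row {S : Type*} [CommRing S] (a₀ : S) (a : ℕ → S) (m : ℕ) (b : ℕ → S) :
    (Matrix.of fun i j : Fin (m + 1) =>
      if (i : ℕ) = 0 then b j else
      if (i : ℕ) ≤ (j : ℕ) then a ((j : ℕ) - (i : ℕ) + 1)
      else if (i : ℕ) = (j : ℕ) + 1 then a₀ else 0).det =
    ∑ j ∈ Finset.range (m + 1), (-a₀) ^ j * b j * hessDet (m - j) a₀ a := by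
  induction m generalizing b with
  | zero => simp [hessDet]
  | succ m ih =>
    rw [Finset.sum_range_succ', Matrix.det_succ_column_zero, Fin.sum_univ_succ,
      Fin.sum_univ_succ, add_comm]
    congr 1
    · rw [Finset.sum_eq_zero (s := Finset.univ), add_zero]
      · have := ih (fun j => b (j + 1))
        simp only [Nat.add_sub_add_right, pow_succ']
        simp only [mul_assoc, ← Finset.mul_sum] at this ⊢
        rw [← this]
        simp only [Matrix.of_apply, Fin.val_succ, Fin.val_zero, zero_add, pow_one]
        simp only [if_false, nonpos_iff_eq_zero, one_ne_zero, if_true, neg_mul,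
          one_mul]
        congr 3
        ext i j
        refine Fin.cases ?_ (fun i => ?_) i
        · simp [Matrix.submatrix]
        · simp [Matrix.submatrix, Fin.succAbove, Fin.lt_def]
      · intro i _
        simp
    · simp only [Matrix.of_apply, Fin.val_zero, pow_zero, one_mul, if_true, hessDet, Nat.sub_zero]
      congr 2
      ext i j
      simp [Matrix.submatrix]

lemma hessDet_succ {S : Type*} [CommRing S] (a₀ : S) (a : ℕ → S) (m : ℕ) :
    hessDet (m + 1) a₀ a =
      ∑ j ∈ Finset.range (m + 1), (-a₀) ^ j * a (j + 1) * hessDet (m - j) a₀ a := by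
  rw [← det_hess_row, hessDet]
  congr 2
  ext i j
  by_cases hi : (i : ℕ) = 0 <;> simp [hi]

/-- The coefficient of `X^e` in `δ(-X, a₁, …, a_m)` is that of `X^e` in `h^(m-e)`, where
`h = Σ_t a_{t+1} X^t`. -/
lemma coeff_hessDet {R : Type*} [CommRing R] (a : ℕ → R) (h : R[X])
    (hh : ∀ t, h.coeff t = a (t + 1)) (m : ℕ) :
    ∀ e, (hessDet m (-(X : R[X])) fun t => C (a t)).coeff e =
      if e ≤ m then (h ^ (m - e)).coeff e else 0 := by
  induction m using Nat.strong_induction_on with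
  | _ m ih =>
  intro e
  cases m with
  | zero =>
    simp only [hessDet, Matrix.det_fin_zero, coeff_one, nonpos_iff_eq_zero, Nat.zero_sub, pow_zero]
    split_ifs <;> rfl
  | succ m =>
    have hterm : ∀ j ∈ Finset.range (m + 1),
        ((-(-(X : R[X]))) ^ j * C (a (j + 1)) *
          hessDet (m - j) (-(X : R[X])) fun t => C (a t)).coeff e =
        if j ≤ e ∧ e ≤ m then a (j + 1) * (h ^ (m - e)).coeff (e - j) else 0 := by
      intro j hj
      rw [Finset.mem_range] at hj
      rw [neg_neg, mul_assoc, coeff_X_pow_mul', coeff_C_mul, ih (m - j) (by omega)]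
      by_cases h1 : j ≤ e
      · by_cases h2 : e ≤ m
        · rw [if_pos h1, if_pos (by omega), if_pos ⟨h1, h2⟩,
            show m - j - (e - j) = m - e by omega]
        · rw [if_pos h1, if_neg (by omega), if_neg (by omega), mul_zero]
      · rw [if_neg h1, if_neg (by omega)]
    rw [hessDet_succ, finsetSum_coeff, Finset.sum_congr rfl hterm]
    by_cases h2 : e ≤ m
    · rw [if_pos (by omega), show m + 1 - e = (m - e) + 1 by omega, pow_succ', coeff_mul,
        Finset.Nat.sum_antidiagonal_eq_sum_range_succ_mk]
      simp only [hh, h2, and_true]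
      rw [← Finset.sum_filter]
      refine Finset.sum_congr ?_ fun _ _ => rfl
      ext j
      simp only [Finset.mem_filter, Finset.mem_range]
      omega
    · rw [Finset.sum_eq_zero fun j _ => if_neg (by omega)]
      split_ifs with h3
      · rw [show m + 1 - e = 0 by omega, pow_zero, coeff_one, if_neg (by omega)]
      · rfl

/-- The inner sum of the theorem is the `m`-th coefficient of `(Σ_{t<n} c_t X^t)^k`. -/
lemma binomial_sum_eq_coeff {R : Type*} [CommRing R] (n : ℕ) (hn : 1 ≤ n) (c : ℕ → R) (k m : ℕ) :
    (∑ i ∈ Finset.range (min m k + 1),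
      (hessDet m (-(X : R[X])) fun t => C (if t < n then c t else 0)).coeff (m - i)
        * c 0 ^ (k - i) * (k.choose i : R)) =
    ((∑ t ∈ Finset.range n, C (c t) * X ^ t) ^ k).coeff m := by
  set h : R[X] := ∑ t ∈ Finset.range (n - 1), C (c (t + 1)) * X ^ t with hdef
  have hh : ∀ t, h.coeff t = if t + 1 < n then c (t + 1) else 0 := by
    intro t
    simp only [hdef, finsetSum_coeff, coeff_C_mul, coeff_X_pow, mul_ite, mul_one, mul_zero,
      Finset.sum_ite_eq, Finset.mem_range]
    exact if_congr (by omega) rfl rfl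
  have hf : (∑ t ∈ Finset.range n, C (c t) * X ^ t) = X * h + C (c 0) := by
    obtain ⟨n, rfl⟩ := Nat.exists_eq_add_of_le' hn
    rw [Finset.sum_range_succ', hdef, Finset.mul_sum]
    simp only [pow_zero, mul_one, Nat.add_sub_cancel]
    congr 1
    exact Finset.sum_congr rfl fun _ _ => by ring
  have hterm : ∀ i, ((X * h) ^ i * C (c 0) ^ (k - i) * (k.choose i : R[X])).coeff m =
      if i ≤ m then (h ^ i).coeff (m - i) * c 0 ^ (k - i) * (k.choose i : R) else 0 := by
    intro i
    rw [← C_pow, ← C_eq_natCast, coeff_mul_C, coeff_mul_C, mul_pow, coeff_X_pow_mul']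
    split_ifs <;> simp
  rw [hf, add_pow, finsetSum_coeff, Finset.sum_congr rfl fun i _ => hterm i,
    ← Finset.sum_filter]
  refine Finset.sum_congr ?_ fun i hi => ?_
  · ext i
    simp only [Finset.mem_filter, Finset.mem_range]
    omega
  · simp only [Finset.mem_filter] at hi
    rw [coeff_hessDet (fun t => if t < n then c t else 0) h hh, if_pos (by omega),
      show m - (m - i) = i by omega]

/-- `C^k` is `r`-circulant and its `(0,p)` entry equals
`Σ_{m ≡ p (mod n)} (Σ_{i=0}^{min(m,k)} d_{m,i}·c₀^{k-i}·C(k,i))·r^{⌊m/n⌋}`, where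
`d_{m,i}` is the coefficient of `X^{m-i}` in `𝒳ₘ(X) = δ(-X, c₁, …, cₘ)` (with `cᵢ := 0`
for `i ≥ n`, and `𝒳₀ = 1` so `d_{0,0} = 1`); all terms with `m > k(n-1)` vanish. -/
theorem stmt11 {R : Type*} [CommRing R] (n : ℕ) (hn : 1 ≤ n) (r : R) (c : ℕ → R) (k : ℕ) :
    (∃ d : ℕ → R, (circMat n r c) ^ k = circMat n r d) ∧
    ∀ p : Fin n,
      ((circMat n r c) ^ k) ⟨0, hn⟩ p =
        ∑ m ∈ (Finset.range (k * (n - 1) + 1)).filter fun m => m % n = (p : ℕ),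
          (∑ i ∈ Finset.range (min m k + 1),
            (hessDet m (-(Polynomial.X : Polynomial R))
                fun t => Polynomial.C (if t < n then c t else 0)).coeff (m - i)
              * c 0 ^ (k - i) * (k.choose i : R))
            * r ^ (m / n) := by
  set f : R[X] := ∑ t ∈ Finset.range n, C (c t) * X ^ t with hf
  have hdeg : (f ^ k).natDegree < k * (n - 1) + 1 := by
    have h1 : f.natDegree ≤ n - 1 := by
      refine natDegree_sum_le_of_forall_le _ _ fun t ht => ?_
      rw [Finset.mem_range] at ht
      exact (natDegree_C_mul_X_pow_le _ _).trans (by omega)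
    exact Nat.lt_succ_of_le (natDegree_pow_le_of_le k h1)
  have hC : circMat n r c ^ k =
      ∑ m ∈ Finset.range (k * (n - 1) + 1), (f ^ k).coeff m • shiftMat n r m := by
    rw [circMat_eq_aeval, ← map_pow, aeval_shiftMat n r _ _ hdeg]
  refine ⟨?_, fun p => ?_⟩
  · rw [hC]
    simp only [shiftMat_eq_circMat]
    exact ⟨_, sum_smul_circMat _ _ _ _ _⟩
  · rw [hC, Matrix.sum_apply, Finset.sum_filter]
    refine Finset.sum_congr rfl fun m _ => ?_
    rw [binomial_sum_eq_coeff n hn c k m, ← hf]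
    simp [shiftMat]
end
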